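/- (Andrews's identity.) Let q ∈ ℂ with 0 < |q| < 1, let n ≥ 1 be an integer, and let a, c, b_1, …, b_n, x_1, …, x_n ∈ ℂ with a ≠ 0, |a| < 1, |x_j| < 1 for all j, and such that c ≠ q^{−m} and b_j x_j ≠ q^{−m} for all integers m ≥ 0 and all j. Then ∑_{(k_1,…,k_n) ∈ ℕ^n} ((a;q)_{k_1+⋯+k_n} / (c;q)_{k_1+⋯+k_n}) · ∏_{j=1}^n (b_j;q)_{k_j} / (q;q)_{k_j} · x_j^{k_j} converges absolutely and equals [(a;q)_∞ ∏_{j=1}^n (b_j x_j;q)_∞] / [(c;q)_∞ ∏_{j=1}^n (x_j;q)_∞] · _{n+1}φ_n[c/a, x_1, …, x_n; b_1 x_1, …, b_n x_n; q, a]. -/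

import Mathlib

open Finset

/-- The `q`-shifted factorial `(a;q)_n` for an arbitrary integer `n`. -/
noncomputable def qpoch (q a : ℂ) (n : ℤ) : ℂ :=
  if 0 ≤ n then ∏ i ∈ Finset.range n.toNat, (1 - a * q ^ (i : ℤ))
  else (∏ i ∈ Finset.range (-n).toNat, (1 - a * q ^ (n + (i : ℤ))))⁻¹

/-- The infinite `q`-shifted factorial `(a;q)_∞`. -/
noncomputable def qinf (q a : ℂ) : ℂ := ∏' i : ℕ, (1 - a * q ^ i)

/-- General term of the multiple series in Andrews's identity. -/
noncomputable def andrewsTerm (q a c : ℂ) {n : ℕ} (b x : Fin n → ℂ) :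
    (Fin n → ℕ) → ℂ := fun k =>
  qpoch q a ((∑ j, k j : ℕ) : ℤ) / qpoch q c ((∑ j, k j : ℕ) : ℤ) *
    ∏ j, qpoch q (b j) ((k j : ℕ) : ℤ) / qpoch q q ((k j : ℕ) : ℤ) * x j ^ (k j)

open Filter Topology

/-- finite q-Pochhammer with natural index -/
noncomputable def qfin (q a : ℂ) (n : ℕ) : ℂ := ∏ i ∈ Finset.range n, (1 - a * q ^ i)

lemma qpoch_natCast (q a : ℂ) (n : ℕ) : qpoch q a (n : ℤ) = qfin q a n := by
  simp [qpoch, qfin]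

lemma qsummable (q a : ℂ) (hq : ‖q‖ < 1) : Summable (fun i : ℕ => ‖-(a * q ^ i)‖) := by
  simp only [norm_neg, norm_mul, norm_pow]
  exact (summable_geometric_of_lt_one (norm_nonneg _) hq).mul_left _

lemma qmultipliable (q a : ℂ) (hq : ‖q‖ < 1) : Multipliable (fun i : ℕ => (1 - a * q ^ i)) := by
  simpa [sub_eq_add_neg] using multipliable_one_add_of_summable (qsummable q a hq)

lemma qfin_tendsto (q a : ℂ) (hq : ‖q‖ < 1) : Tendsto (qfin q a) atTop (𝓝 (qinf q a)) :=
  (qmultipliable q a hq).tendsto_prod_tprod_nat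

lemma qinf_ne_zero (q a : ℂ) (hq : ‖q‖ < 1) (h : ∀ i : ℕ, 1 - a * q ^ i ≠ 0) : qinf q a ≠ 0 := by
  have := tprod_one_add_ne_zero_of_summable (f := fun i : ℕ => -(a * q ^ i))
    (by simpa [sub_eq_add_neg] using h) (qsummable q a hq)
  simpa [qinf, sub_eq_add_neg] using this

lemma qfin_ne_zero (q a : ℂ) (h : ∀ i : ℕ, 1 - a * q ^ i ≠ 0) (n : ℕ) : qfin q a n ≠ 0 :=
  Finset.prod_ne_zero_iff.mpr fun i _ => h i

lemma qinf_split (q a : ℂ) (hq : ‖q‖ < 1) (n : ℕ) :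
    qinf q a = qfin q a n * qinf q (a * q ^ n) := by
  have h := Multipliable.prod_mul_tprod_nat_mul' (f := fun i : ℕ => 1 - a * q ^ i) (k := n)
    (by simpa [pow_add, mul_assoc, mul_comm, mul_left_comm] using qmultipliable q (a * q ^ n) hq)
  unfold qinf qfin
  rw [← h]
  congr 1
  refine tprod_congr fun i => ?_
  ring

lemma one_sub_ne_of_norm (q a : ℂ) (hq : ‖q‖ < 1) (ha : ‖a‖ < 1) (i : ℕ) : 1 - a * q ^ i ≠ 0 := by
  intro h
  have h1 : a * q ^ i = 1 := (sub_eq_zero.mp h).symm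
  have h2 : ‖a * q ^ i‖ < 1 := by
    rw [norm_mul, norm_pow]
    calc ‖a‖ * ‖q‖ ^ i ≤ ‖a‖ * 1 := by
          gcongr
          exact pow_le_one₀ (norm_nonneg _) hq.le
      _ < 1 := by simpa
  rw [h1] at h2
  simp at h2

lemma one_sub_ne_of_ne (q a : ℂ) (hq0 : q ≠ 0) (h : ∀ m : ℕ, a ≠ q ^ (-(m : ℤ))) (i : ℕ) :
    1 - a * q ^ i ≠ 0 := by
  intro h0
  apply h i
  have h1 : a * q ^ i = 1 := (sub_eq_zero.mp h0).symm
  rw [zpow_neg, zpow_natCast]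
  exact eq_inv_of_mul_eq_one_left h1

lemma ratio_bounded (q a c : ℂ) (hq : ‖q‖ < 1) (hc : ∀ i : ℕ, 1 - c * q ^ i ≠ 0) :
    ∃ C : ℝ, 0 ≤ C ∧ ∀ n, ‖qfin q a n / qfin q c n‖ ≤ C := by
  have ht := (qfin_tendsto q a hq).div (qfin_tendsto q c hq) (qinf_ne_zero q c hq hc)
  obtain ⟨C, hC⟩ := (Metric.isBounded_range_of_tendsto _ ht).exists_norm_le
  refine ⟨C, (norm_nonneg _).trans (hC _ ⟨0, rfl⟩), fun n => hC _ ⟨n, rfl⟩⟩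

lemma qbinom_summable (q A z : ℂ) (hq : ‖q‖ < 1) (hz : ‖z‖ < 1) :
    Summable (fun k : ℕ => ‖qfin q A k / qfin q q k * z ^ k‖) := by
  obtain ⟨C, hC0, hC⟩ := ratio_bounded q A q hq (one_sub_ne_of_norm q q hq hq)
  refine Summable.of_nonneg_of_le (fun _ => norm_nonneg _) (fun k => ?_)
    ((summable_geometric_of_lt_one (norm_nonneg _) hz).mul_left C)
  rw [norm_mul, norm_pow]
  gcongr
  exact hC k

lemma norm_mul_pow_lt (q z : ℂ) (hq : ‖q‖ < 1) (hz : ‖z‖ < 1) (n : ℕ) : ‖z * q ^ n‖ < 1 := by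
  rw [norm_mul, norm_pow]
  calc ‖z‖ * ‖q‖ ^ n ≤ ‖z‖ * 1 := by
        gcongr
        exact pow_le_one₀ (norm_nonneg _) hq.le
    _ < 1 := by simpa

lemma qbinom_step (q A z : ℂ) (hq : ‖q‖ < 1) (hz : ‖z‖ < 1) :
    (1 - z) * ∑' k : ℕ, qfin q A k / qfin q q k * z ^ k =
      (1 - A * z) * ∑' k : ℕ, qfin q A k / qfin q q k * (z * q) ^ k := by
  have hzq : ‖z * q‖ < 1 := by simpa using norm_mul_pow_lt q z hq hz 1
  have s1 := (qbinom_summable q A z hq hz).of_norm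
  have s2 := (qbinom_summable q A (z * q) hq hzq).of_norm
  have e1 : (∑' k : ℕ, qfin q A k / qfin q q k * z ^ k) -
      ∑' k : ℕ, qfin q A k / qfin q q k * (z * q) ^ k =
      z * ((∑' k : ℕ, qfin q A k / qfin q q k * z ^ k) -
        A * ∑' k : ℕ, qfin q A k / qfin q q k * (z * q) ^ k) := by
    rw [← s1.tsum_sub s2, ← tsum_mul_left, ← s1.tsum_sub (s2.mul_left A), ← tsum_mul_left,
      (s1.sub s2).tsum_eq_zero_add]
    simp only [pow_zero, sub_self, zero_add]
    refine tsum_congr fun k => ?_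
    have h1 : qfin q q k ≠ 0 := qfin_ne_zero q q (one_sub_ne_of_norm q q hq hq) k
    have h2 : 1 - q * q ^ k ≠ 0 := one_sub_ne_of_norm q q hq hq k
    have e1 : qfin q A (k + 1) = qfin q A k * (1 - A * q ^ k) := Finset.prod_range_succ _ _
    have e2 : qfin q q (k + 1) = qfin q q k * (1 - q * q ^ k) := Finset.prod_range_succ _ _
    rw [e1, e2]
    have e3 : qfin q A k * (1 - A * q ^ k) / (qfin q q k * (1 - q * q ^ k)) * z ^ (k + 1) -
        qfin q A k * (1 - A * q ^ k) / (qfin q q k * (1 - q * q ^ k)) * (z * q) ^ (k + 1) =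
        qfin q A k / qfin q q k * ((1 - A * q ^ k) * z ^ (k + 1)) *
          ((1 - q * q ^ k) / (1 - q * q ^ k)) := by
      rw [mul_pow]
      simp only [div_eq_mul_inv, mul_inv]
      ring
    rw [e3, div_self h2, mul_pow]
    ring
  linear_combination e1

lemma qbinom_iter (q A z : ℂ) (hq : ‖q‖ < 1) (hz : ‖z‖ < 1) (n : ℕ) :
    qfin q z n * ∑' k : ℕ, qfin q A k / qfin q q k * z ^ k =
      qfin q (A * z) n * ∑' k : ℕ, qfin q A k / qfin q q k * (z * q ^ n) ^ k := by
  induction n with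
  | zero => simp [qfin]
  | succ n ih =>
    have e1 : qfin q z (n + 1) = qfin q z n * (1 - z * q ^ n) := Finset.prod_range_succ _ _
    have e2 : qfin q (A * z) (n + 1) = qfin q (A * z) n * (1 - A * z * q ^ n) :=
      Finset.prod_range_succ _ _
    have h := qbinom_step q A (z * q ^ n) hq (norm_mul_pow_lt q z hq hz n)
    rw [e1, e2, pow_succ, ← mul_assoc z]
    linear_combination (1 - z * q ^ n) * ih + qfin q (A * z) n * h

lemma qbinom (q A z : ℂ) (hq : ‖q‖ < 1) (hz : ‖z‖ < 1) :
    ∑' k : ℕ, qfin q A k / qfin q q k * z ^ k = qinf q (A * z) / qinf q z := by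
  have hne := qinf_ne_zero q z hq (one_sub_ne_of_norm q z hq hz)
  have h0 : Tendsto (fun n : ℕ => z * q ^ n) atTop (𝓝 0) := by
    simpa using (tendsto_pow_atTop_nhds_zero_of_norm_lt_one hq).const_mul z
  have hlim : Tendsto (fun n : ℕ => ∑' k : ℕ, qfin q A k / qfin q q k * (z * q ^ n) ^ k) atTop
      (𝓝 (∑' k : ℕ, qfin q A k / qfin q q k * (0 : ℂ) ^ k)) := by
    refine tendsto_tsum_of_dominated_convergence (qbinom_summable q A z hq hz) ?_ ?_
    · intro k
      exact (h0.pow k).const_mul _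
    · refine Eventually.of_forall fun n k => ?_
      rw [norm_mul, norm_mul, norm_pow, norm_pow]
      gcongr
      rw [norm_mul, norm_pow]
      exact mul_le_of_le_one_right (norm_nonneg _) (pow_le_one₀ (norm_nonneg _) hq.le)
  have hone : ∑' k : ℕ, qfin q A k / qfin q q k * (0 : ℂ) ^ k = 1 := by
    rw [tsum_eq_single 0]
    · simp [qfin]
    · intro k hk
      simp [hk]
  rw [hone] at hlim
  have hL := (qfin_tendsto q z hq).mul_const (∑' k : ℕ, qfin q A k / qfin q q k * z ^ k)
  have hR := (qfin_tendsto q (A * z) hq).mul hlim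
  have := tendsto_nhds_unique (hL.congr (qbinom_iter q A z hq hz)) hR
  rw [eq_div_iff hne]
  linear_combination this

lemma prod_pi_sum (n : ℕ) (f : Fin n → ℕ → ℂ) (hf : ∀ j, Summable fun k => ‖f j k‖) :
    Summable (fun k : Fin n → ℕ => ‖∏ j, f j (k j)‖) ∧
      ∑' k : Fin n → ℕ, ∏ j, f j (k j) = ∏ j, ∑' k, f j k := by
  induction n with
  | zero =>
    refine ⟨(hasSum_fintype _).summable, ?_⟩
    rw [tsum_fintype]
    simp
  | succ n ih =>
    obtain ⟨i1, i2⟩ := ih (fun j => f j.succ) (fun j => hf _)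
    constructor
    · rw [← (Fin.consEquiv fun _ => ℕ).summable_iff]
      have := (hf 0).mul_norm i1
      refine this.congr fun p => ?_
      simp [Fin.consEquiv, Fin.prod_univ_succ]
    · rw [← (Fin.consEquiv fun _ => ℕ).tsum_eq, Fin.prod_univ_succ, ← i2,
        tsum_mul_tsum_of_summable_norm (hf 0) i1]
      refine tsum_congr fun p => ?_
      simp [Fin.consEquiv, Fin.prod_univ_succ]

theorem andrews_identity (q a c : ℂ) (n : ℕ) (hn : 1 ≤ n) (b x : Fin n → ℂ)
    (hq0 : 0 < ‖q‖) (hq1 : ‖q‖ < 1)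
    (ha : a ≠ 0) (ha1 : ‖a‖ < 1) (hx : ∀ j, ‖x j‖ < 1)
    (hcq : ∀ m : ℕ, c ≠ q ^ (-(m : ℤ)))
    (hbxq : ∀ j, ∀ m : ℕ, b j * x j ≠ q ^ (-(m : ℤ))) :
    Summable (fun k : Fin n → ℕ => ‖andrewsTerm q a c b x k‖) ∧
    (∑' k : Fin n → ℕ, andrewsTerm q a c b x k) =
      qinf q a * (∏ j, qinf q (b j * x j)) / (qinf q c * ∏ j, qinf q (x j)) *
        ∑' ℓ : ℕ,
          (qpoch q (c / a) (ℓ : ℤ) * ∏ j, qpoch q (x j) (ℓ : ℤ)) /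
            (qpoch q q (ℓ : ℤ) * ∏ j, qpoch q (b j * x j) (ℓ : ℤ)) * a ^ ℓ := by
  have hqne : q ≠ 0 := norm_pos_iff.mp hq0
  have hc := one_sub_ne_of_ne q c hqne hcq
  have hbx := fun j => one_sub_ne_of_ne q (b j * x j) hqne (hbxq j)
  have hterm : ∀ k, andrewsTerm q a c b x k =
      qfin q a (∑ j, k j) / qfin q c (∑ j, k j) *
        ∏ j, (qfin q (b j) (k j) / qfin q q (k j) * x j ^ (k j)) := by
    intro k
    simp only [andrewsTerm, qpoch_natCast]
  have hpi := prod_pi_sum n (fun j k => qfin q (b j) k / qfin q q k * x j ^ k)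
    (fun j => qbinom_summable q (b j) (x j) hq1 (hx j))
  constructor
  · obtain ⟨C, hC0, hC⟩ := ratio_bounded q a c hq1 hc
    refine Summable.of_nonneg_of_le (fun _ => norm_nonneg _) (fun k => ?_) (hpi.1.mul_left C)
    rw [hterm, norm_mul]
    gcongr
    exact hC _
  · simp only [qpoch_natCast]
    have hca := qinf_ne_zero q c hq1 hc
    -- the double family
    have hdouble : Summable (fun p : (Fin n → ℕ) × ℕ =>
        (∏ j, (qfin q (b j) (p.1 j) / qfin q q (p.1 j) * x j ^ (p.1 j))) *
          (qfin q (c / a) p.2 / qfin q q p.2 * (a * q ^ (∑ j, p.1 j)) ^ p.2)) := by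
      have h := hpi.1.mul_norm (qbinom_summable q (c / a) a hq1 ha1)
      refine Summable.of_norm (Summable.of_nonneg_of_le (fun _ => norm_nonneg _) (fun p => ?_) h)
      rw [norm_mul, norm_mul, norm_pow, norm_mul (∏ j, _), norm_mul (qfin q (c / a) p.2 / qfin q q p.2),
        norm_pow]
      gcongr
      rw [norm_mul, norm_pow]
      exact mul_le_of_le_one_right (norm_nonneg _) (pow_le_one₀ (norm_nonneg _) hq1.le)
    have hk : ∀ k, andrewsTerm q a c b x k = qinf q a / qinf q c * ∑' ℓ : ℕ,
        (∏ j, (qfin q (b j) (k j) / qfin q q (k j) * x j ^ (k j))) *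
          (qfin q (c / a) ℓ / qfin q q ℓ * (a * q ^ (∑ j, k j)) ^ ℓ) := by
      intro k
      have haN := norm_mul_pow_lt q a hq1 ha1 (∑ j, k j)
      rw [hterm, tsum_mul_left, qbinom q (c / a) _ hq1 haN, ← mul_assoc (c / a),
        div_mul_cancel₀ _ ha]
      have h1 := qinf_split q a hq1 (∑ j, k j)
      have h2 := qinf_split q c hq1 (∑ j, k j)
      have h3 := qinf_ne_zero q _ hq1 (one_sub_ne_of_norm q _ hq1 haN)
      have h4 := qfin_ne_zero q c hc (∑ j, k j)
      have h5 : qinf q (c * q ^ (∑ j, k j)) ≠ 0 := by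
        intro h
        rw [h, mul_zero] at h2
        exact hca h2
      rw [h1, h2]
      generalize qinf q (c * q ^ (∑ j, k j)) = C at h5 ⊢
      generalize qinf q (a * q ^ (∑ j, k j)) = A at h3 ⊢
      generalize (∏ j, (qfin q (b j) (k j) / qfin q q (k j) * x j ^ (k j))) = R
      field_simp
    have hl : ∀ ℓ : ℕ, ∑' k : Fin n → ℕ,
        (∏ j, (qfin q (b j) (k j) / qfin q q (k j) * x j ^ (k j))) *
          (qfin q (c / a) ℓ / qfin q q ℓ * (a * q ^ (∑ j, k j)) ^ ℓ) =
        (∏ j, qinf q (b j * x j)) / (∏ j, qinf q (x j)) *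
        ((qfin q (c / a) ℓ * ∏ j, qfin q (x j) ℓ) /
            (qfin q q ℓ * ∏ j, qfin q (b j * x j) ℓ) * a ^ ℓ) := by
      intro ℓ
      have hxl := fun j => norm_mul_pow_lt q (x j) hq1 (hx j) ℓ
      have h := (prod_pi_sum n (fun j k => qfin q (b j) k / qfin q q k * (x j * q ^ ℓ) ^ k)
        (fun j => qbinom_summable q (b j) _ hq1 (hxl j))).2
      have e1 : ∀ k : Fin n → ℕ,
          (∏ j, (qfin q (b j) (k j) / qfin q q (k j) * x j ^ (k j))) *
          (qfin q (c / a) ℓ / qfin q q ℓ * (a * q ^ (∑ j, k j)) ^ ℓ) =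
          (qfin q (c / a) ℓ / qfin q q ℓ * a ^ ℓ) *
          ∏ j, (qfin q (b j) (k j) / qfin q q (k j) * (x j * q ^ ℓ) ^ (k j)) := by
        intro k
        have e2 : (q ^ (∑ j, k j)) ^ ℓ = ∏ j, (q ^ ℓ) ^ (k j) := by
          rw [Finset.prod_pow_eq_pow_sum, ← pow_mul, ← pow_mul, mul_comm]
        have e3 : ∏ j, (qfin q (b j) (k j) / qfin q q (k j) * (x j * q ^ ℓ) ^ (k j)) =
            (∏ j, (qfin q (b j) (k j) / qfin q q (k j) * x j ^ (k j))) *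
              ∏ j, (q ^ ℓ) ^ (k j) := by
          rw [← Finset.prod_mul_distrib]
          refine Finset.prod_congr rfl fun j _ => ?_
          rw [mul_pow]
          ring
        rw [e3, mul_pow, e2]
        ring
      rw [tsum_congr e1, tsum_mul_left, h]
      have e4 : ∏ j, ∑' k : ℕ, qfin q (b j) k / qfin q q k * (x j * q ^ ℓ) ^ k =
          (∏ j, qinf q (b j * x j)) / (∏ j, qinf q (x j)) *
          ((∏ j, qfin q (x j) ℓ) / ∏ j, qfin q (b j * x j) ℓ) := by
        rw [← Finset.prod_div_distrib, ← Finset.prod_div_distrib, ← Finset.prod_mul_distrib]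
        refine Finset.prod_congr rfl fun j _ => ?_
        rw [qbinom q (b j) _ hq1 (hxl j), ← mul_assoc, qinf_split q (b j * x j) hq1 ℓ,
          qinf_split q (x j) hq1 ℓ]
        have h3 := qinf_ne_zero q _ hq1 (one_sub_ne_of_norm q _ hq1 (hxl j))
        have h4 := qfin_ne_zero q _ (hbx j) ℓ
        have h5 := qfin_ne_zero q _ (one_sub_ne_of_norm q _ hq1 (hx j)) ℓ
        field_simp
      rw [e4]
      simp only [div_eq_mul_inv, mul_inv]
      ring
    have hcomm := Summable.tsum_comm (f := fun (k : Fin n → ℕ) (ℓ : ℕ) =>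
        (∏ j, (qfin q (b j) (k j) / qfin q q (k j) * x j ^ (k j))) *
          (qfin q (c / a) ℓ / qfin q q ℓ * (a * q ^ (∑ j, k j)) ^ ℓ)) hdouble
    rw [tsum_congr hk, tsum_mul_left, ← hcomm, tsum_congr hl, tsum_mul_left]
    simp only [div_eq_mul_inv, mul_inv]
    ring
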